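/- arXiv:2111.14835 — 3 statements merged into one kernel-verified Lean document; each statement's English description precedes it below -/
import Mathlib

section
/- Let T > 0 and let u, v : [0,1] × [0,T] → ℝ³ be two smooth solutions of the 1-dimensional Schrödinger flow with Neumann boundary conditions on [0,T]. If u(·,0) = v(·,0), then u = v on [0,1] × [0,T]. -/
open MeasureTheory Set

noncomputable section

abbrev E3 := EuclideanSpace ℝ (Fin 3)

/-- The cross product on `EuclideanSpace ℝ (Fin 3)`. -/
def cross3 (a b : E3) : E3 :=
  (WithLp.equiv 2 (Fin 3 → ℝ)).symm
    (crossProduct ((WithLp.equiv 2 (Fin 3 → ℝ)) a) ((WithLp.equiv 2 (Fin 3 → ℝ)) b))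

/-- Partial derivative in the space variable of `u = u x t`. -/
def pdx (u : ℝ → ℝ → E3) : ℝ → ℝ → E3 := fun x t => deriv (fun y => u y t) x

/-- Partial derivative in the time variable of `u = u x t`. -/
def pdt (u : ℝ → ℝ → E3) : ℝ → ℝ → E3 := fun x t => deriv (fun s => u x s) t

/-- `u` is a smooth solution of the 1-dimensional Schrödinger flow with Neumann
boundary conditions on `[0,1] × [0,T]`. -/
def IsSol (T : ℝ) (u : ℝ → ℝ → E3) : Prop :=
  ContDiff ℝ (⊤ : ℕ∞) (fun p : ℝ × ℝ => u p.1 p.2) ∧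
  (∀ x ∈ Icc (0:ℝ) 1, ∀ t ∈ Icc (0:ℝ) T, ‖u x t‖ = 1) ∧
  (∀ x ∈ Icc (0:ℝ) 1, ∀ t ∈ Icc (0:ℝ) T, pdt u x t = cross3 (u x t) (pdx (pdx u) x t)) ∧
  (∀ t ∈ Icc (0:ℝ) T, pdx u 0 t = 0 ∧ pdx u 1 t = 0)

/-- Squared `L²` norm on `[0,1]`. -/
def L2sq (f : ℝ → E3) : ℝ := ∫ x in (0:ℝ)..1, ‖f x‖ ^ 2

/-- Squared `H^k` Sobolev norm on `[0,1]`. -/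
def Hsq (k : ℕ) (f : ℝ → E3) : ℝ :=
  ∑ j ∈ Finset.range (k + 1), ∫ x in (0:ℝ)..1, ‖deriv^[j] f x‖ ^ 2

/-!
The difference `w = u - v` of two solutions solves a linear equation `∂ₜw = A ∂ₓ²w + C w` in which
`A = u × ·` is skew-adjoint, with `C = · × ∂ₓ²v`. Skew-adjointness cancels the terms of the time
derivative of `∫ ‖w‖² + ‖∂ₓw‖²` that carry `∂ₓ²w`, up to an `x`-derivative whose integral vanishes
by the Neumann conditions. What remains is bounded by a multiple of `∫ ‖w‖² + ‖∂ₓw‖²` itself, so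
Grönwall's inequality keeps it equal to zero.
-/

open Function
open scoped RealInnerProductSpace

section PartialDerivatives

variable {𝕜 F : Type*} [NontriviallyNormedField 𝕜] [NormedAddCommGroup F] [NormedSpace 𝕜 F]
  {f g : 𝕜 → 𝕜 → F}

/-- The partial derivative in the first variable of a curried function; it is used for functions
whose uncurried form is differentiable, and is `0` by convention where the slice is not. -/
def derivFst (f : 𝕜 → 𝕜 → F) (x t : 𝕜) : F := deriv (fun y => f y t) x

/-- The partial derivative in the second variable of a curried function, with the same convention
as `derivFst`. -/
def derivSnd (f : 𝕜 → 𝕜 → F) (x t : 𝕜) : F := deriv (fun s => f x s) t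

lemma hasDerivAt_fst_of_differentiableAt {x t : 𝕜}
    (hf : DifferentiableAt 𝕜 (uncurry f) (x, t)) :
    HasDerivAt (fun y => f y t) (fderiv 𝕜 (uncurry f) (x, t) (1, 0)) x :=
  hf.hasFDerivAt.comp_hasDerivAt (f := fun y => (y, t)) x
    ((hasDerivAt_id x).prodMk (hasDerivAt_const x t))

lemma hasDerivAt_snd_of_differentiableAt {x t : 𝕜}
    (hf : DifferentiableAt 𝕜 (uncurry f) (x, t)) :
    HasDerivAt (fun s => f x s) (fderiv 𝕜 (uncurry f) (x, t) (0, 1)) t :=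
  hf.hasFDerivAt.comp_hasDerivAt (f := fun s => (x, s)) t
    ((hasDerivAt_const t x).prodMk (hasDerivAt_id t))

lemma hasDerivAt_derivFst {x t : 𝕜} (hf : DifferentiableAt 𝕜 (uncurry f) (x, t)) :
    HasDerivAt (fun y => f y t) (derivFst f x t) x :=
  (hasDerivAt_fst_of_differentiableAt hf).differentiableAt.hasDerivAt

lemma hasDerivAt_derivSnd {x t : 𝕜} (hf : DifferentiableAt 𝕜 (uncurry f) (x, t)) :
    HasDerivAt (fun s => f x s) (derivSnd f x t) t :=
  (hasDerivAt_snd_of_differentiableAt hf).differentiableAt.hasDerivAt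

lemma uncurry_derivFst (hf : Differentiable 𝕜 (uncurry f)) :
    uncurry (derivFst f) = fun p => fderiv 𝕜 (uncurry f) p (1, 0) :=
  funext fun p => (hasDerivAt_fst_of_differentiableAt (hf p)).deriv

lemma uncurry_derivSnd (hf : Differentiable 𝕜 (uncurry f)) :
    uncurry (derivSnd f) = fun p => fderiv 𝕜 (uncurry f) p (0, 1) :=
  funext fun p => (hasDerivAt_snd_of_differentiableAt (hf p)).deriv

lemma contDiff_derivFst {m n : WithTop ℕ∞} (hf : ContDiff 𝕜 n (uncurry f)) (hmn : m + 1 ≤ n) :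
    ContDiff 𝕜 m (uncurry (derivFst f)) := by
  rw [uncurry_derivFst (hf.differentiable (by rintro rfl; simp at hmn))]
  exact (hf.fderiv_right hmn).clm_apply contDiff_const

lemma contDiff_derivSnd {m n : WithTop ℕ∞} (hf : ContDiff 𝕜 n (uncurry f)) (hmn : m + 1 ≤ n) :
    ContDiff 𝕜 m (uncurry (derivSnd f)) := by
  rw [uncurry_derivSnd (hf.differentiable (by rintro rfl; simp at hmn))]
  exact (hf.fderiv_right hmn).clm_apply contDiff_const

lemma derivFst_sub (hf : Differentiable 𝕜 (uncurry f)) (hg : Differentiable 𝕜 (uncurry g)) :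
    derivFst (f - g) = derivFst f - derivFst g :=
  funext₂ fun x t => ((hasDerivAt_derivFst (hf (x, t))).sub (hasDerivAt_derivFst (hg (x, t)))).deriv

lemma derivSnd_sub (hf : Differentiable 𝕜 (uncurry f)) (hg : Differentiable 𝕜 (uncurry g)) :
    derivSnd (f - g) = derivSnd f - derivSnd g :=
  funext₂ fun x t => ((hasDerivAt_derivSnd (hf (x, t))).sub (hasDerivAt_derivSnd (hg (x, t)))).deriv

lemma derivSnd_derivFst_comm [IsRCLikeNormedField 𝕜] (hf : ContDiff 𝕜 2 (uncurry f)) :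
    derivSnd (derivFst f) = derivFst (derivSnd f) := by
  have hf₁ : Differentiable 𝕜 (uncurry f) := hf.differentiable two_ne_zero
  have hf₂ : Differentiable 𝕜 (fderiv 𝕜 (uncurry f)) :=
    (hf.fderiv_right (m := 1) one_add_one_eq_two.le).differentiable one_ne_zero
  have hfst : Differentiable 𝕜 (uncurry (derivFst f)) :=
    (contDiff_derivFst hf one_add_one_eq_two.le).differentiable one_ne_zero
  have hsnd : Differentiable 𝕜 (uncurry (derivSnd f)) :=
    (contDiff_derivSnd hf one_add_one_eq_two.le).differentiable one_ne_zero
  have hsymm (p : 𝕜 × 𝕜) : IsSymmSndFDerivAt 𝕜 (uncurry f) p :=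
    hf.contDiffAt.isSymmSndFDerivAt minSmoothness_of_isRCLikeNormedField.le
  refine uncurry_injective ?_
  rw [uncurry_derivSnd hfst, uncurry_derivFst hsnd, uncurry_derivFst hf₁, uncurry_derivSnd hf₁]
  funext p
  rw [fderiv_clm_apply (hf₂ p) (differentiableAt_const _),
    fderiv_clm_apply (hf₂ p) (differentiableAt_const _)]
  simpa using (hsymm p).eq (0, 1) (1, 0)

end PartialDerivatives

section BalanceLaw

lemma hasDerivAt_intervalIntegral_of_contDiff {F : Type*} [NormedAddCommGroup F] [NormedSpace ℝ F]
    {f : ℝ → ℝ → F} (hf : ContDiff ℝ 1 (uncurry f)) (a b t : ℝ) :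
    HasDerivAt (fun s => ∫ x in a..b, f x s) (∫ x in a..b, derivSnd f x t) t := by
  have hslice (s : ℝ) : Continuous fun x => f x s := hf.continuous.comp (.prodMk_left s)
  have hderiv : Continuous (uncurry (derivSnd f)) :=
    (contDiff_derivSnd (m := 0) hf (zero_add 1).le).continuous
  obtain ⟨M, hM⟩ := (isCompact_uIcc.prod isCompact_Icc).exists_bound_of_continuousOn
    (s := uIcc a b ×ˢ Icc (t - 1) (t + 1)) hderiv.continuousOn
  refine (intervalIntegral.hasDerivAt_integral_of_dominated_loc_of_deriv_le
    (F := fun s x => f x s) (F' := fun s x => derivSnd f x s) (bound := fun _ => M)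
    (Icc_mem_nhds (sub_one_lt t) (lt_add_one t))
    (.of_forall fun s => (hslice s).aestronglyMeasurable)
    ((hslice t).intervalIntegrable a b)
    (hderiv.comp (.prodMk_left t)).aestronglyMeasurable
    (.of_forall fun x hx s hs => hM (x, s) ⟨uIoc_subset_uIcc hx, hs⟩)
    intervalIntegrable_const (.of_forall fun x _ s _ => ?_)).2
  exact hasDerivAt_derivSnd (hf.differentiable one_ne_zero (x, s))

lemma eq_zero_of_intervalIntegral_eq_zero {f : ℝ → ℝ} {a b : ℝ} (hab : a < b)
    (hf : ContinuousOn f (Icc a b)) (hf_nonneg : ∀ x ∈ Icc a b, 0 ≤ f x)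
    (hint : ∫ x in a..b, f x = 0) : ∀ x ∈ Icc a b, f x = 0 := by
  intro x hx
  by_contra hne
  exact (intervalIntegral.integral_pos hab hf (fun y hy => hf_nonneg y (Ioc_subset_Icc_self hy))
    ⟨x, hx, (hf_nonneg x hx).lt_of_ne' hne⟩).ne' hint

variable {e f : ℝ → ℝ → ℝ} {a b t₀ t₁ t K : ℝ}

lemma abs_integral_derivSnd_le (hab : a ≤ b) (he : ContDiff ℝ 1 (uncurry e))
    (hf : ContDiff ℝ 1 (uncurry f)) (hflux : f a t = f b t)
    (hbalance : ∀ x ∈ Icc a b, |derivSnd e x t - derivFst f x t| ≤ K * e x t) :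
    |∫ x in a..b, derivSnd e x t| ≤ K * ∫ x in a..b, e x t := by
  have hslice : Continuous fun x : ℝ => (x, t) := .prodMk_left t
  have het : Continuous fun x => derivSnd e x t :=
    (contDiff_derivSnd (m := 0) he (zero_add 1).le).continuous.comp hslice
  have hfx : Continuous fun x => derivFst f x t :=
    (contDiff_derivFst (m := 0) hf (zero_add 1).le).continuous.comp hslice
  have hflux_integral : ∫ x in a..b, derivFst f x t = 0 := by
    rw [intervalIntegral.integral_eq_sub_of_hasDerivAt
      (fun x _ => hasDerivAt_derivFst (hf.differentiable one_ne_zero (x, t)))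
      (hfx.intervalIntegrable a b), hflux, sub_self]
  calc |∫ x in a..b, derivSnd e x t|
      = |∫ x in a..b, (derivSnd e x t - derivFst f x t)| := by
        rw [intervalIntegral.integral_sub (het.intervalIntegrable a b)
          (hfx.intervalIntegrable a b), hflux_integral, sub_zero]
    _ ≤ ∫ x in a..b, |derivSnd e x t - derivFst f x t| :=
        intervalIntegral.abs_integral_le_integral_abs hab
    _ ≤ ∫ x in a..b, K * e x t :=
        intervalIntegral.integral_mono_on hab ((het.sub hfx).abs.intervalIntegrable a b)
          ((continuous_const.mul (he.continuous.comp hslice)).intervalIntegrable a b) hbalance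
    _ = K * ∫ x in a..b, e x t := intervalIntegral.integral_const_mul K _

theorem eq_zero_of_abs_derivSnd_sub_derivFst_le (hab : a < b) (he : ContDiff ℝ 1 (uncurry e))
    (hf : ContDiff ℝ 1 (uncurry f))
    (he_nonneg : ∀ x ∈ Icc a b, ∀ t ∈ Icc t₀ t₁, 0 ≤ e x t)
    (hflux : ∀ t ∈ Icc t₀ t₁, f a t = f b t)
    (hbalance : ∀ x ∈ Icc a b, ∀ t ∈ Icc t₀ t₁, |derivSnd e x t - derivFst f x t| ≤ K * e x t)
    (hinit : ∀ x ∈ Icc a b, e x t₀ = 0) :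
    ∀ x ∈ Icc a b, ∀ t ∈ Icc t₀ t₁, e x t = 0 := by
  have hderiv (t : ℝ) := hasDerivAt_intervalIntegral_of_contDiff he a b t
  have hinit_integral : ∫ x in a..b, e x t₀ = 0 := by
    rw [intervalIntegral.integral_congr fun x hx => hinit x (uIcc_of_le hab.le ▸ hx),
      intervalIntegral.integral_zero]
  have hgronwall : ∀ t ∈ Icc t₀ t₁, ∫ x in a..b, e x t = 0 := by
    refine eq_zero_of_abs_deriv_le_mul_abs_self_of_eq_zero_right (K := K)
      (fun t _ => (hderiv t).continuousAt.continuousWithinAt)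
      (fun t _ => (hderiv t).hasDerivWithinAt) hinit_integral fun t ht => ?_
    have ht' := Ico_subset_Icc_self ht
    have hnonneg : 0 ≤ ∫ x in a..b, e x t :=
      intervalIntegral.integral_nonneg hab.le fun x hx => he_nonneg x hx t ht'
    rw [Real.norm_eq_abs, Real.norm_of_nonneg hnonneg]
    exact abs_integral_derivSnd_le hab.le he hf (hflux t ht')
      fun x hx => hbalance x hx t ht'
  intro x hx t ht
  have hslice : Continuous fun x => e x t := he.continuous.comp (.prodMk_left t)
  exact eq_zero_of_intervalIntegral_eq_zero hab hslice.continuousOn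
    (fun y hy => he_nonneg y hy t ht) (hgronwall t ht) x hx

end BalanceLaw

section LinearEquation

variable {E : Type*} [NormedAddCommGroup E] [InnerProductSpace ℝ E]
  {A C : ℝ → ℝ → E →L[ℝ] E} {w : ℝ → ℝ → E} {a b t₀ t₁ x t M : ℝ}

/-- The density whose integral is the squared `H¹` norm of `w` in the first variable. -/
def sobolevDensity (w : ℝ → ℝ → E) (x t : ℝ) : ℝ := ‖w x t‖ ^ 2 + ‖derivFst w x t‖ ^ 2

/-- The flux of `sobolevDensity w` for the equation `∂ₜw = A ∂ₓ²w + C w`. The term `∂ₜw - C w`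
stands for `A ∂ₓ²w`, so that the derivative of the flux contains no third `x`-derivative of `w`. -/
def sobolevFlux (A C : ℝ → ℝ → E →L[ℝ] E) (w : ℝ → ℝ → E) (x t : ℝ) : ℝ :=
  2 * (⟪w x t, A x t (derivFst w x t)⟫ + ⟪derivFst w x t, derivSnd w x t - C x t (w x t)⟫)

lemma contDiff_sobolevDensity (hw : ContDiff ℝ 2 (uncurry w)) :
    ContDiff ℝ 1 (uncurry (sobolevDensity w)) :=
  ((hw.of_le one_le_two).norm_sq ℝ).add
    ((contDiff_derivFst hw one_add_one_eq_two.le).norm_sq ℝ)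

lemma contDiff_sobolevFlux (hA : ContDiff ℝ 1 (uncurry A)) (hC : ContDiff ℝ 1 (uncurry C))
    (hw : ContDiff ℝ 2 (uncurry w)) : ContDiff ℝ 1 (uncurry (sobolevFlux A C w)) := by
  have hw₁ : ContDiff ℝ 1 (uncurry w) := hw.of_le one_le_two
  have hwx := contDiff_derivFst hw one_add_one_eq_two.le
  have hwt := contDiff_derivSnd hw one_add_one_eq_two.le
  exact contDiff_const.mul
    ((hw₁.inner ℝ (hA.clm_apply hwx)).add (hwx.inner ℝ (hwt.sub (hC.clm_apply hw₁))))

lemma derivSnd_sobolevDensity (hw : ContDiff ℝ 2 (uncurry w)) (x t : ℝ) :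
    derivSnd (sobolevDensity w) x t =
      2 * ⟪w x t, derivSnd w x t⟫ + 2 * ⟪derivFst w x t, derivFst (derivSnd w) x t⟫ := by
  have hwx := contDiff_derivFst hw one_add_one_eq_two.le
  have hwt := hasDerivAt_derivSnd (hw.differentiable two_ne_zero (x, t))
  have hwxt := hasDerivAt_derivSnd (hwx.differentiable one_ne_zero (x, t))
  rw [derivSnd_derivFst_comm hw] at hwxt
  exact (hwt.norm_sq.add hwxt.norm_sq).deriv

lemma derivFst_sobolevFlux (hA : ContDiff ℝ 1 (uncurry A)) (hC : ContDiff ℝ 1 (uncurry C))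
    (hw : ContDiff ℝ 2 (uncurry w)) (x t : ℝ) :
    derivFst (sobolevFlux A C w) x t =
      2 * (⟪w x t, derivFst A x t (derivFst w x t) + A x t (derivFst (derivFst w) x t)⟫
        + ⟪derivFst w x t, A x t (derivFst w x t)⟫
        + (⟪derivFst w x t, derivFst (derivSnd w) x t
            - (derivFst C x t (w x t) + C x t (derivFst w x t))⟫
          + ⟪derivFst (derivFst w) x t, derivSnd w x t - C x t (w x t)⟫)) := by
  have hA' := hasDerivAt_derivFst (hA.differentiable one_ne_zero (x, t))
  have hC' := hasDerivAt_derivFst (hC.differentiable one_ne_zero (x, t))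
  have hw' := hasDerivAt_derivFst (hw.differentiable two_ne_zero (x, t))
  have hwx := hasDerivAt_derivFst
    ((contDiff_derivFst hw one_add_one_eq_two.le).differentiable one_ne_zero (x, t))
  have hwt := hasDerivAt_derivFst
    ((contDiff_derivSnd hw one_add_one_eq_two.le).differentiable one_ne_zero (x, t))
  exact (((hw'.inner ℝ (hA'.clm_apply hwx)).add
    (hwx.inner ℝ (hwt.sub (hC'.clm_apply hw')))).const_mul 2).deriv

lemma derivSnd_sobolevDensity_sub_derivFst_sobolevFlux (hA : ContDiff ℝ 1 (uncurry A))
    (hC : ContDiff ℝ 1 (uncurry C)) (hw : ContDiff ℝ 2 (uncurry w))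
    (hskew : ∀ ξ, ⟪ξ, A x t ξ⟫ = 0)
    (heqn : derivSnd w x t = A x t (derivFst (derivFst w) x t) + C x t (w x t)) :
    derivSnd (sobolevDensity w) x t - derivFst (sobolevFlux A C w) x t =
      2 * (⟪w x t, C x t (w x t)⟫ - ⟪w x t, derivFst A x t (derivFst w x t)⟫
        + ⟪derivFst w x t, derivFst C x t (w x t)⟫
        + ⟪derivFst w x t, C x t (derivFst w x t)⟫) := by
  rw [derivSnd_sobolevDensity hw, derivFst_sobolevFlux hA hC hw, heqn, add_sub_cancel_right]
  simp only [inner_add_right, inner_sub_right, hskew]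
  ring

lemma abs_inner_clm_apply_le {F : Type*} [NormedAddCommGroup F] [NormedSpace ℝ F] (L : F →L[ℝ] E)
    (hL : ‖L‖ ≤ M) (ξ : E) (η : F) :
    |⟪ξ, L η⟫| ≤ M * (‖ξ‖ * ‖η‖) :=
  calc |⟪ξ, L η⟫| ≤ ‖ξ‖ * ‖L η‖ := abs_real_inner_le_norm ξ (L η)
    _ ≤ ‖ξ‖ * (M * ‖η‖) := by gcongr; exact L.le_of_opNorm_le hL η
    _ = M * (‖ξ‖ * ‖η‖) := by ring

lemma abs_derivSnd_sobolevDensity_sub_derivFst_sobolevFlux_le (hA : ContDiff ℝ 1 (uncurry A))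
    (hC : ContDiff ℝ 1 (uncurry C)) (hw : ContDiff ℝ 2 (uncurry w))
    (hskew : ∀ ξ, ⟪ξ, A x t ξ⟫ = 0)
    (heqn : derivSnd w x t = A x t (derivFst (derivFst w) x t) + C x t (w x t))
    (hAx_bound : ‖derivFst A x t‖ ≤ M) (hC_bound : ‖C x t‖ ≤ M)
    (hCx_bound : ‖derivFst C x t‖ ≤ M) :
    |derivSnd (sobolevDensity w) x t - derivFst (sobolevFlux A C w) x t| ≤
      4 * M * sobolevDensity w x t := by
  have h₁ := abs_le.1 (abs_inner_clm_apply_le _ hC_bound (w x t) (w x t))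
  have h₂ := abs_le.1 (abs_inner_clm_apply_le _ hAx_bound (w x t) (derivFst w x t))
  have h₃ := abs_le.1 (abs_inner_clm_apply_le _ hCx_bound (derivFst w x t) (w x t))
  have h₄ := abs_le.1 (abs_inner_clm_apply_le _ hC_bound (derivFst w x t) (derivFst w x t))
  have hcross : M * (2 * ‖w x t‖ * ‖derivFst w x t‖) ≤ M * sobolevDensity w x t :=
    mul_le_mul_of_nonneg_left (two_mul_le_add_sq _ _) ((norm_nonneg _).trans hC_bound)
  rw [derivSnd_sobolevDensity_sub_derivFst_sobolevFlux hA hC hw hskew heqn, abs_le]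
  unfold sobolevDensity at hcross ⊢
  constructor <;> linarith

theorem eq_zero_of_linear_neumann (hab : a < b) (hA : ContDiff ℝ 1 (uncurry A))
    (hC : ContDiff ℝ 1 (uncurry C)) (hw : ContDiff ℝ 2 (uncurry w))
    (hskew : ∀ x ∈ Icc a b, ∀ t ∈ Icc t₀ t₁, ∀ ξ, ⟪ξ, A x t ξ⟫ = 0)
    (heqn : ∀ x ∈ Icc a b, ∀ t ∈ Icc t₀ t₁,
      derivSnd w x t = A x t (derivFst (derivFst w) x t) + C x t (w x t))
    (hneumann : ∀ t ∈ Icc t₀ t₁, derivFst w a t = 0 ∧ derivFst w b t = 0)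
    (hinit : ∀ x ∈ Icc a b, w x t₀ = 0) :
    ∀ x ∈ Icc a b, ∀ t ∈ Icc t₀ t₁, w x t = 0 := by
  have hAx := (contDiff_derivFst (m := 0) hA (zero_add 1).le).continuous
  have hCx := (contDiff_derivFst (m := 0) hC (zero_add 1).le).continuous
  obtain ⟨M, hM⟩ := (isCompact_Icc.prod isCompact_Icc).exists_bound_of_continuousOn
    (s := Icc a b ×ˢ Icc t₀ t₁) (hAx.prodMk (hC.continuous.prodMk hCx)).continuousOn
  have hdensity_init : ∀ x ∈ Icc a b, sobolevDensity w x t₀ = 0 := by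
    intro x hx
    have hwx : derivFst w x t₀ = 0 := by
      have hslice := (hasDerivAt_derivFst (hw.differentiable two_ne_zero (x, t₀))).differentiableAt
      rw [derivFst, ← hslice.derivWithin (uniqueDiffOn_Icc hab x hx),
        derivWithin_congr hinit (hinit x hx), derivWithin_fun_const, Pi.zero_apply]
    simp [sobolevDensity, hinit x hx, hwx]
  have hdensity : ∀ x ∈ Icc a b, ∀ t ∈ Icc t₀ t₁, sobolevDensity w x t = 0 := by
    refine eq_zero_of_abs_derivSnd_sub_derivFst_le (K := 4 * M) hab (contDiff_sobolevDensity hw)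
      (contDiff_sobolevFlux hA hC hw) (fun x _ t _ => by unfold sobolevDensity; positivity)
      (fun t ht => by simp [sobolevFlux, hneumann t ht]) (fun x hx t ht => ?_) hdensity_init
    obtain ⟨hAx_bound, hC_bound⟩ := norm_prod_le_iff.1 (hM (x, t) ⟨hx, ht⟩)
    obtain ⟨hC_bound, hCx_bound⟩ := norm_prod_le_iff.1 hC_bound
    exact abs_derivSnd_sobolevDensity_sub_derivFst_sobolevFlux_le hA hC hw (hskew x hx t ht)
      (heqn x hx t ht) hAx_bound hC_bound hCx_bound
  intro x hx t ht
  have hsq := (add_eq_zero_iff_of_nonneg (sq_nonneg _) (sq_nonneg _)).1 (hdensity x hx t ht)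
  simpa using hsq.1

end LinearEquation

section SkewFlow

variable {E : Type*} [NormedAddCommGroup E] [InnerProductSpace ℝ E]
  {B : E →L[ℝ] E →L[ℝ] E} {a b t₀ t₁ : ℝ} {u v : ℝ → ℝ → E}

/-- `u` satisfies `∂ₜu = B(u, ∂ₓ²u)` on `[a, b] × [t₀, t₁]` with Neumann boundary conditions at `a`
and `b`. The Schrödinger flow is the case where `B` is the cross product and `u` has unit length.
Smoothness is kept as a separate hypothesis. -/
structure IsNeumannFlow (B : E →L[ℝ] E →L[ℝ] E) (a b t₀ t₁ : ℝ) (u : ℝ → ℝ → E) : Prop where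
  eqn : ∀ x ∈ Icc a b, ∀ t ∈ Icc t₀ t₁, derivSnd u x t = B (u x t) (derivFst (derivFst u) x t)
  neumann : ∀ t ∈ Icc t₀ t₁, derivFst u a t = 0 ∧ derivFst u b t = 0

theorem uniqueness_schrodinger_flow_general (hB : ∀ ξ η, ⟪η, B ξ η⟫ = 0) (hab : a < b)
    (hu : ContDiff ℝ 2 (uncurry u)) (hv : ContDiff ℝ 3 (uncurry v))
    (hu_flow : IsNeumannFlow B a b t₀ t₁ u) (hv_flow : IsNeumannFlow B a b t₀ t₁ v)
    (hinit : ∀ x ∈ Icc a b, u x t₀ = v x t₀) :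
    ∀ x ∈ Icc a b, ∀ t ∈ Icc t₀ t₁, u x t = v x t := by
  have hv₂ : ContDiff ℝ 2 (uncurry v) := hv.of_le (by norm_num)
  have hu' := hu.differentiable two_ne_zero
  have hv' := hv₂.differentiable two_ne_zero
  have hux := (contDiff_derivFst hu one_add_one_eq_two.le).differentiable one_ne_zero
  have hvx := contDiff_derivFst (m := 2) hv two_add_one_eq_three.le
  have hvxx : ContDiff ℝ 1 (uncurry (derivFst (derivFst v))) :=
    contDiff_derivFst hvx one_add_one_eq_two.le
  have hdiff : ∀ x ∈ Icc a b, ∀ t ∈ Icc t₀ t₁, (u - v) x t = 0 := by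
    refine eq_zero_of_linear_neumann (A := fun x t => B (u x t))
      (C := fun x t => B.flip (derivFst (derivFst v) x t)) hab
      (B.contDiff.comp (hu.of_le one_le_two)) (B.flip.contDiff.comp hvxx) (hu.sub hv₂)
      (fun x _ t _ => hB (u x t)) (fun x hx t ht => ?_) (fun t ht => ?_)
      fun x hx => sub_eq_zero.2 (hinit x hx)
    · rw [derivSnd_sub hu' hv', derivFst_sub hu' hv',
        derivFst_sub hux (hvx.differentiable two_ne_zero)]
      simp only [Pi.sub_apply, hu_flow.eqn x hx t ht, hv_flow.eqn x hx t ht, map_sub,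
        ContinuousLinearMap.flip_apply]
      abel
    · simp [derivFst_sub hu' hv', hu_flow.neumann t ht, hv_flow.neumann t ht]
  exact fun x hx t ht => sub_eq_zero.1 (hdiff x hx t ht)

end SkewFlow

/-- The cross product of `E3` as a continuous bilinear map. -/
def cross3L : E3 →L[ℝ] E3 →L[ℝ] E3 :=
  LinearMap.toContinuousLinearMap <| LinearMap.toContinuousLinearMap.toLinearMap ∘ₗ
    LinearMap.mk₂ ℝ cross3 (fun _ _ _ => by simp [cross3]) (fun _ _ _ => by simp [cross3])
      (fun _ _ _ => by simp [cross3]) (fun _ _ _ => by simp [cross3])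

lemma inner_cross3L_self (ξ η : E3) : ⟪η, cross3L ξ η⟫ = 0 := by
  rw [EuclideanSpace.inner_eq_star_dotProduct, star_trivial, dotProduct_comm]
  exact dot_cross_self ξ.ofLp η.ofLp

lemma IsSol.isNeumannFlow {T : ℝ} {u : ℝ → ℝ → E3} (hu : IsSol T u) :
    IsNeumannFlow cross3L 0 1 0 T u :=
  ⟨hu.2.2.1, hu.2.2.2⟩

theorem uniqueness_schrodinger_flow
    (T : ℝ) (hT : 0 < T) (u v : ℝ → ℝ → E3)
    (hu : IsSol T u) (hv : IsSol T v)
    (h0 : ∀ x ∈ Icc (0:ℝ) 1, u x 0 = v x 0) :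
    ∀ x ∈ Icc (0:ℝ) 1, ∀ t ∈ Icc (0:ℝ) T, u x t = v x t := by
  exact uniqueness_schrodinger_flow_general inner_cross3L_self zero_lt_one
    (contDiff_infty.1 hu.1 2) (contDiff_infty.1 hv.1 3) hu.isNeumannFlow hv.isNeumannFlow h0

end
end

section
/- Let u be a smooth solution of the 1-dimensional Schrödinger flow with Neumann boundary conditions on [0,T]. Then for every t ∈ [0,T], (d/dt) ∫₀¹ |∂_x u(x,t)|² dx = 0; equivalently, ∫₀¹ |∂_x u(x,t)|² dx = ∫₀¹ |∂_x u(x,0)|² dx for all t ∈ [0,T]. -/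
/-!
For a curve `u` in an inner product space, integrating by parts in the time derivative of the
Dirichlet energy `∫ |∂ₓu|²` leaves the boundary flux `⟨∂ₓu, ∂ₜu⟩` and the bulk term
`-∫ ⟨∂ₓ²u, ∂ₜu⟩`. Neumann conditions kill the flux, and `∂ₜu = u × ∂ₓ²u` is orthogonal to
`∂ₓ²u`, which kills the bulk term.
-/

open MeasureTheory Set

noncomputable section

open Function (uncurry)
open scoped InnerProductSpace

section PartialDerivatives

variable {𝕜 E F : Type*} [NontriviallyNormedField 𝕜] [NormedAddCommGroup E] [NormedSpace 𝕜 E]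
  [NormedAddCommGroup F] [NormedSpace 𝕜 F]

lemma hasDerivAt_comp_prodMk_left {f : 𝕜 × F → E} {f' : 𝕜 × F →L[𝕜] E} {x : 𝕜} {t : F}
    (hf : HasFDerivAt f f' (x, t)) : HasDerivAt (fun y => f (y, t)) (f' (1, 0)) x :=
  hf.comp_hasDerivAt x ((hasDerivAt_id' x).prodMk (hasDerivAt_const x t))

lemma hasDerivAt_comp_prodMk_right {f : F × 𝕜 → E} {f' : F × 𝕜 →L[𝕜] E} {x : F} {t : 𝕜}
    (hf : HasFDerivAt f f' (x, t)) : HasDerivAt (fun s => f (x, s)) (f' (0, 1)) t :=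
  hf.comp_hasDerivAt t ((hasDerivAt_const t x).prodMk (hasDerivAt_id' t))

lemma contDiff_deriv_left {m n : WithTop ℕ∞} {u : 𝕜 → F → E} (hu : ContDiff 𝕜 n (uncurry u))
    (hmn : m + 1 ≤ n) : ContDiff 𝕜 m (uncurry fun x t => deriv (u · t) x) := by
  have hdiff : Differentiable 𝕜 (uncurry u) := hu.differentiable (by rintro rfl; simp at hmn)
  have hpartial : (uncurry fun x t => deriv (u · t) x) =
      fun p => fderiv 𝕜 (uncurry u) p (1, 0) :=
    funext fun p => (hasDerivAt_comp_prodMk_left (hdiff p).hasFDerivAt).deriv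
  rw [hpartial]
  exact (hu.fderiv_right hmn).clm_apply contDiff_const

lemma contDiff_deriv_right {m n : WithTop ℕ∞} {u : F → 𝕜 → E} (hu : ContDiff 𝕜 n (uncurry u))
    (hmn : m + 1 ≤ n) : ContDiff 𝕜 m (uncurry fun x t => deriv (u x) t) := by
  have hdiff : Differentiable 𝕜 (uncurry u) := hu.differentiable (by rintro rfl; simp at hmn)
  have hpartial : (uncurry fun x t => deriv (u x) t) =
      fun p => fderiv 𝕜 (uncurry u) p (0, 1) :=
    funext fun p => (hasDerivAt_comp_prodMk_right (hdiff p).hasFDerivAt).deriv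
  rw [hpartial]
  exact (hu.fderiv_right hmn).clm_apply contDiff_const

lemma deriv_deriv_comm_of_contDiff {n : WithTop ℕ∞} {u : 𝕜 → 𝕜 → E}
    (hu : ContDiff 𝕜 n (uncurry u)) (hn : minSmoothness 𝕜 2 ≤ n) (x t : 𝕜) :
    deriv (fun s => deriv (u · s) x) t = deriv (fun y => deriv (u y) t) x := by
  have two_le : 1 + 1 ≤ n := one_add_one_eq_two.trans_le (le_minSmoothness.trans hn)
  have hdiff : Differentiable 𝕜 (uncurry u) :=
    hu.differentiable (by rintro rfl; simp at two_le)
  have hfderiv : HasFDerivAt (fderiv 𝕜 (uncurry u))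
      (fderiv 𝕜 (fderiv 𝕜 (uncurry u)) (x, t)) (x, t) :=
    ((hu.fderiv_right two_le).differentiable one_ne_zero (x, t)).hasFDerivAt
  have hleft (s : 𝕜) : deriv (u · s) x = fderiv 𝕜 (uncurry u) (x, s) (1, 0) :=
    (hasDerivAt_comp_prodMk_left (hdiff _).hasFDerivAt).deriv
  have hright (y : 𝕜) : deriv (u y) t = fderiv 𝕜 (uncurry u) (y, t) (0, 1) :=
    (hasDerivAt_comp_prodMk_right (hdiff _).hasFDerivAt).deriv
  have htx : HasDerivAt (fun s => fderiv 𝕜 (uncurry u) (x, s) (1, 0))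
      (fderiv 𝕜 (fderiv 𝕜 (uncurry u)) (x, t) (0, 1) (1, 0)) t := by
    simpa using (hasDerivAt_comp_prodMk_right hfderiv).clm_apply (hasDerivAt_const t _)
  have hxt : HasDerivAt (fun y => fderiv 𝕜 (uncurry u) (y, t) (0, 1))
      (fderiv 𝕜 (fderiv 𝕜 (uncurry u)) (x, t) (1, 0) (0, 1)) x := by
    simpa using (hasDerivAt_comp_prodMk_left hfderiv).clm_apply (hasDerivAt_const x _)
  simp only [hleft, hright]
  rw [htx.deriv, hxt.deriv]
  exact hu.contDiffAt.isSymmSndFDerivAt hn (0, 1) (1, 0)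

end PartialDerivatives

lemma hasDerivAt_intervalIntegral_of_continuous {𝕜 E : Type*} [RCLike 𝕜] [NormedAddCommGroup E]
    [NormedSpace ℝ E] [NormedSpace 𝕜 E] {μ : Measure ℝ} [IsLocallyFiniteMeasure μ] {a b : ℝ}
    {f f' : 𝕜 → ℝ → E} (hf : ∀ s, Continuous (f s)) (hf' : Continuous (uncurry f'))
    (hderiv : ∀ s x, HasDerivAt (f · x) (f' s x) s) (t : 𝕜) :
    HasDerivAt (fun s => ∫ x in a..b, f s x ∂μ) (∫ x in a..b, f' t x ∂μ) t := by
  obtain ⟨C, hC⟩ := ((isCompact_closedBall t 1).prod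
    (isCompact_uIcc (a := a) (b := b))).exists_bound_of_continuousOn hf'.continuousOn
  exact (intervalIntegral.hasDerivAt_integral_of_dominated_loc_of_deriv_le
    (bound := fun _ => C) (Metric.closedBall_mem_nhds t one_pos)
    (.of_forall fun s => (hf s).aestronglyMeasurable)
    ((hf t).intervalIntegrable a b)
    (hf'.uncurry_left t).aestronglyMeasurable
    (.of_forall fun x hx s hs => hC (s, x) ⟨hs, uIoc_subset_uIcc hx⟩)
    intervalIntegrable_const
    (.of_forall fun x _ s _ => hderiv s x)).2

section InnerProductSpace

variable {E : Type*} [NormedAddCommGroup E] [InnerProductSpace ℝ E]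

lemma integral_inner_deriv_eq_sub {a b : ℝ} {v w v' w' : ℝ → E}
    (hv : ∀ x ∈ uIcc a b, HasDerivAt v (v' x) x) (hw : ∀ x ∈ uIcc a b, HasDerivAt w (w' x) x)
    (hv' : ContinuousOn v' (uIcc a b)) (hw' : ContinuousOn w' (uIcc a b)) :
    ∫ x in a..b, ⟪v x, w' x⟫_ℝ =
      ⟪v b, w b⟫_ℝ - ⟪v a, w a⟫_ℝ - ∫ x in a..b, ⟪v' x, w x⟫_ℝ := by
  have hvw' : IntervalIntegrable (fun x => ⟪v x, w' x⟫_ℝ) volume a b :=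
    (ContinuousOn.inner (HasDerivAt.continuousOn hv) hw').intervalIntegrable
  have hv'w : IntervalIntegrable (fun x => ⟪v' x, w x⟫_ℝ) volume a b :=
    (hv'.inner (HasDerivAt.continuousOn hw)).intervalIntegrable
  rw [eq_sub_iff_add_eq, ← intervalIntegral.integral_add hvw' hv'w]
  exact intervalIntegral.integral_eq_sub_of_hasDerivAt
    (fun x hx => (hv x hx).inner ℝ (hw x hx)) (hvw'.add hv'w)

/-- The Dirichlet energy `∫ₐᵇ |v'(x)|² dx` of a curve `v`, without the customary factor `1 / 2`. -/
def dirichletEnergy (a b : ℝ) (v : ℝ → E) : ℝ := ∫ x in a..b, ‖deriv v x‖ ^ 2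

variable {u : ℝ → ℝ → E}

lemma hasDerivAt_dirichletEnergy (hu : ContDiff ℝ 2 (uncurry u)) (a b t : ℝ) :
    HasDerivAt (fun s => dirichletEnergy a b (u · s))
      (∫ x in a..b, 2 * ⟪deriv (u · t) x, deriv (fun s => deriv (u · s) x) t⟫_ℝ) t := by
  have hux : ContDiff ℝ 1 (uncurry fun x s => deriv (u · s) x) :=
    contDiff_deriv_left hu one_add_one_eq_two.le
  have huxt : Continuous (uncurry fun x s => deriv (fun r => deriv (u · r) x) s) :=
    (contDiff_deriv_right hux (zero_add 1).le).continuous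
  refine hasDerivAt_intervalIntegral_of_continuous
    (f' := fun s x => 2 * ⟪deriv (u · s) x, deriv (fun r => deriv (u · r) x) s⟫_ℝ)
    (fun s => (hux.continuous.uncurry_right s).norm.pow 2)
    (((hux.continuous.inner huxt).comp continuous_swap).const_mul 2) (fun s x => ?_) t
  have hux_slice : DifferentiableAt ℝ (fun r => deriv (u · r) x) s :=
    (hux.comp (contDiff_prodMk_right x)).differentiable one_ne_zero s
  exact hux_slice.hasDerivAt.norm_sq

theorem hasDerivAt_dirichletEnergy_eq_flux_sub_integral (hu : ContDiff ℝ 2 (uncurry u))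
    (a b t : ℝ) :
    HasDerivAt (fun s => dirichletEnergy a b (u · s))
      (2 * (⟪deriv (u · t) b, deriv (u b) t⟫_ℝ - ⟪deriv (u · t) a, deriv (u a) t⟫_ℝ -
        ∫ x in a..b, ⟪deriv (deriv (u · t)) x, deriv (u x) t⟫_ℝ)) t := by
  have hux : ContDiff ℝ 1 (fun x => deriv (u · t) x) :=
    (contDiff_deriv_left hu one_add_one_eq_two.le).comp (contDiff_prodMk_left t)
  have hut : ContDiff ℝ 1 (fun x => deriv (u x) t) :=
    (contDiff_deriv_right hu one_add_one_eq_two.le).comp (contDiff_prodMk_left t)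
  rw [← integral_inner_deriv_eq_sub
    (fun x _ => (hux.differentiable one_ne_zero x).hasDerivAt)
    (fun x _ => (hut.differentiable one_ne_zero x).hasDerivAt)
    hux.continuous_deriv_one.continuousOn hut.continuous_deriv_one.continuousOn,
    ← intervalIntegral.integral_const_mul]
  have hcomm (x : ℝ) : deriv (fun s => deriv (u · s) x) t = deriv (fun y => deriv (u y) t) x :=
    deriv_deriv_comm_of_contDiff hu (by simp) x t
  simpa only [hcomm] using hasDerivAt_dirichletEnergy hu a b t

/-- `horth` holds for every flow `∂ₜu = J(u) ∂ₓ²u` with `J(u)` skew-adjoint; `hflux` covers Neumann,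
time-independent Dirichlet and periodic boundary conditions. -/
theorem energy_conservation_schrodinger_flow_general {a b T : ℝ}
    (hu : ContDiff ℝ 2 (uncurry u))
    (horth : ∀ x ∈ uIcc a b, ∀ t ∈ Icc 0 T, ⟪deriv (deriv (u · t)) x, deriv (u x) t⟫_ℝ = 0)
    (hflux : ∀ t ∈ Icc 0 T,
      ⟪deriv (u · t) b, deriv (u b) t⟫_ℝ = ⟪deriv (u · t) a, deriv (u a) t⟫_ℝ) :
    ∀ t ∈ Icc 0 T,
      HasDerivAt (fun s => dirichletEnergy a b (u · s)) 0 t ∧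
      dirichletEnergy a b (u · t) = dirichletEnergy a b (u · 0) := by
  have hderiv : ∀ t ∈ Icc 0 T, HasDerivAt (fun s => dirichletEnergy a b (u · s)) 0 t := by
    intro t ht
    have hbulk : ∫ x in a..b, ⟪deriv (deriv (u · t)) x, deriv (u x) t⟫_ℝ = 0 :=
      (intervalIntegral.integral_congr fun x hx => horth x hx t ht).trans
        intervalIntegral.integral_zero
    simpa only [hbulk, hflux t ht, sub_self, mul_zero] using
      hasDerivAt_dirichletEnergy_eq_flux_sub_integral hu a b t
  exact fun t ht => ⟨hderiv t ht, constant_of_has_deriv_right_zero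
    (HasDerivAt.continuousOn hderiv)
    (fun s hs => (hderiv s (Ico_subset_Icc_self hs)).hasDerivWithinAt) t ht⟩

end InnerProductSpace

lemma inner_cross3_self (v w : E3) : ⟪w, cross3 v w⟫_ℝ = 0 := by
  rw [real_inner_comm, EuclideanSpace.inner_eq_star_dotProduct, star_trivial]
  exact dot_cross_self v.ofLp w.ofLp

namespace IsSol

variable {T : ℝ} {u : ℝ → ℝ → E3}

lemma contDiff_uncurry (hu : IsSol T u) (n : ℕ) : ContDiff ℝ n (uncurry u) :=
  hu.1.of_le (mod_cast le_top)

lemma inner_pdx_pdx_pdt (hu : IsSol T u) {x t : ℝ} (hx : x ∈ Icc 0 1) (ht : t ∈ Icc 0 T) :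
    ⟪pdx (pdx u) x t, pdt u x t⟫_ℝ = 0 := by
  rw [hu.2.2.1 x hx t ht, inner_cross3_self]

lemma inner_pdx_pdt_boundary (hu : IsSol T u) {t : ℝ} (ht : t ∈ Icc 0 T) :
    ⟪pdx u 1 t, pdt u 1 t⟫_ℝ = ⟪pdx u 0 t, pdt u 0 t⟫_ℝ := by
  simp only [hu.2.2.2 t ht, inner_zero_left]

end IsSol

theorem energy_conservation_schrodinger_flow
    (T : ℝ) (hT : 0 < T) (u : ℝ → ℝ → E3) (hu : IsSol T u) :
    ∀ t ∈ Icc (0:ℝ) T,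
      deriv (fun s => ∫ x in (0:ℝ)..1, ‖pdx u x s‖ ^ 2) t = 0 ∧
      (∫ x in (0:ℝ)..1, ‖pdx u x t‖ ^ 2) = ∫ x in (0:ℝ)..1, ‖pdx u x 0‖ ^ 2 := by
  exact fun t ht => (energy_conservation_schrodinger_flow_general (hu.contDiff_uncurry 2)
    (fun x hx s hs => hu.inner_pdx_pdx_pdt (uIcc_of_le (zero_le_one' ℝ) ▸ hx) hs)
    (fun s hs => hu.inner_pdx_pdt_boundary hs) t ht).imp_left HasDerivAt.deriv

end
end

section
/- Let u be a smooth solution of the 1-dimensional Schrödinger flow with Neumann boundary conditions on [0,T]. Then for every t ∈ [0,T], ∫₀¹ |∂_x²u(x,t)|² dx = ∫₀¹ |∂_t u(x,t)|² dx + ∫₀¹ |∂_x u(x,t)|⁴ dx. -/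
open MeasureTheory Set

noncomputable section

/-!
Differentiating `‖u‖ = 1` twice along `x` gives `⟪u, u_xx⟫ = -‖u_x‖²`: the normal component of
`u_xx` is determined by `u_x`. The flow equation says that `u_t` is the tangential component of
`u_xx` rotated by a right angle, so Lagrange's identity for `‖u × u_xx‖²` reads
`‖u_t‖² = ‖u_xx‖² - ‖u_x‖⁴` pointwise.
-/

open Topology

section InnerProductSpace

variable {F : Type*} [NormedAddCommGroup F] [InnerProductSpace ℝ F] {f : ℝ → F} {r x : ℝ}

theorem inner_deriv_eq_zero_of_eventually_norm_eq (hf : DifferentiableAt ℝ f x)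
    (hr : ∀ᶠ y in 𝓝 x, ‖f y‖ = r) : inner ℝ (f x) (deriv f x) = 0 := by
  have hconst : (fun y => ‖f y‖ ^ 2) =ᶠ[𝓝 x] fun _ => r ^ 2 := hr.mono fun y hy => by simp only [hy]
  have hderiv : 2 * inner ℝ (f x) (deriv f x) = 0 :=
    hf.hasDerivAt.norm_sq.unique ((hasDerivAt_const x _).congr_of_eventuallyEq hconst)
  linarith

theorem inner_deriv_deriv_eq_neg_norm_deriv_sq (hf : ∀ᶠ y in 𝓝 x, DifferentiableAt ℝ f y)
    (hf' : DifferentiableAt ℝ (deriv f) x) (hr : ∀ᶠ y in 𝓝 x, ‖f y‖ = r) :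
    inner ℝ (f x) (deriv (deriv f) x) = -‖deriv f x‖ ^ 2 := by
  have horth : (fun y => inner ℝ (f y) (deriv f y)) =ᶠ[𝓝 x] fun _ => 0 := by
    filter_upwards [hf, hr.eventually_nhds] with y hfy hry
    exact inner_deriv_eq_zero_of_eventually_norm_eq hfy hry
  have hderiv : inner ℝ (f x) (deriv (deriv f) x) + inner ℝ (deriv f x) (deriv f x) = 0 :=
    (hf.self_of_nhds.hasDerivAt.inner ℝ hf'.hasDerivAt).unique
      ((hasDerivAt_const x _).congr_of_eventuallyEq horth)
  rw [real_inner_self_eq_norm_sq] at hderiv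
  linarith

end InnerProductSpace

theorem norm_cross3_sq (a b : E3) :
    ‖cross3 a b‖ ^ 2 = ‖a‖ ^ 2 * ‖b‖ ^ 2 - inner ℝ a b ^ 2 := by
  have hdot (v w : E3) : inner ℝ v w = v.ofLp ⬝ᵥ w.ofLp := dotProduct_comm _ _
  simp only [← real_inner_self_eq_norm_sq, hdot]
  have hcross := cross_dot_cross a.ofLp b.ofLp a.ofLp b.ofLp
  rwa [dotProduct_comm b.ofLp a.ofLp, ← sq] at hcross

section UnitCurve

variable {γ : ℝ → E3}

theorem norm_cross3_deriv_deriv_sq {x : ℝ} (hγ : ∀ᶠ y in 𝓝 x, DifferentiableAt ℝ γ y)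
    (hγ' : DifferentiableAt ℝ (deriv γ) x) (hunit : ∀ᶠ y in 𝓝 x, ‖γ y‖ = 1) :
    ‖cross3 (γ x) (deriv (deriv γ) x)‖ ^ 2 = ‖deriv (deriv γ) x‖ ^ 2 - ‖deriv γ x‖ ^ 4 := by
  have hnormal : inner ℝ (γ x) (deriv (deriv γ) x) = -‖deriv γ x‖ ^ 2 :=
    inner_deriv_deriv_eq_neg_norm_deriv_sq hγ hγ' hunit
  rw [norm_cross3_sq, hnormal, hunit.self_of_nhds]
  ring

theorem integral_norm_deriv_deriv_sq {a b : ℝ} (hγ : ContDiff ℝ 2 γ)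
    (hunit : ∀ x ∈ uIoo a b, ‖γ x‖ = 1) :
    (∫ x in a..b, ‖deriv (deriv γ) x‖ ^ 2) =
      (∫ x in a..b, ‖cross3 (γ x) (deriv (deriv γ) x)‖ ^ 2) + ∫ x in a..b, ‖deriv γ x‖ ^ 4 := by
  have hγ' : ContDiff ℝ 1 (deriv γ) := hγ.deriv'
  have hcont₁ : Continuous fun x => ‖deriv γ x‖ ^ 4 := hγ'.continuous.norm.pow 4
  have hcont₂ : Continuous fun x => ‖deriv (deriv γ) x‖ ^ 2 := hγ'.continuous_deriv_one.norm.pow 2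
  rw [← sub_eq_iff_eq_add, ← intervalIntegral.integral_sub (hcont₂.intervalIntegrable a b)
    (hcont₁.intervalIntegrable a b)]
  refine intervalIntegral.integral_congr_uIoo fun x hx => ?_
  have hnear : ∀ᶠ y in 𝓝 x, ‖γ y‖ = 1 := (isOpen_Ioo.eventually_mem hx).mono hunit
  exact (norm_cross3_deriv_deriv_sq (.of_forall (hγ.differentiable two_ne_zero))
    (hγ.differentiable_deriv_two x) hnear).symm

end UnitCurve

theorem uxx_L2_identity_schrodinger_flow_general {u : ℝ → ℝ → E3} {a b t : ℝ}
    (hu : ContDiff ℝ 2 fun x => u x t) (hunit : ∀ x ∈ uIoo a b, ‖u x t‖ = 1)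
    (hflow : ∀ x ∈ uIoo a b,
      HasDerivAt (fun s => u x s) (cross3 (u x t) (pdx (pdx u) x t)) t) :
    (∫ x in a..b, ‖pdx (pdx u) x t‖ ^ 2) =
      (∫ x in a..b, ‖pdt u x t‖ ^ 2) + ∫ x in a..b, ‖pdx u x t‖ ^ 4 := by
  have hut : ∫ x in a..b, ‖pdt u x t‖ ^ 2 =
      ∫ x in a..b, ‖cross3 (u x t) (pdx (pdx u) x t)‖ ^ 2 :=
    intervalIntegral.integral_congr_uIoo fun x hx =>
      congrArg (fun v : E3 => ‖v‖ ^ 2) (hflow x hx).deriv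
  rw [hut]
  exact integral_norm_deriv_deriv_sq hu hunit

namespace IsSol

variable {T : ℝ} {u : ℝ → ℝ → E3}

theorem contDiff_space (hu : IsSol T u) (t : ℝ) : ContDiff ℝ 2 fun x => u x t :=
  contDiff_infty.1 (hu.1.comp (contDiff_prodMk_left t)) 2

theorem hasDerivAt_time (hu : IsSol T u) {x t : ℝ} (hx : x ∈ Icc (0 : ℝ) 1)
    (ht : t ∈ Icc (0 : ℝ) T) :
    HasDerivAt (fun s => u x s) (cross3 (u x t) (pdx (pdx u) x t)) t := by
  have hdiff : Differentiable ℝ fun s => u x s :=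
    (hu.1.comp (contDiff_prodMk_right x)).differentiable (by simp)
  exact hu.2.2.1 x hx t ht ▸ (hdiff t).hasDerivAt

end IsSol

theorem uxx_L2_identity_schrodinger_flow
    (T : ℝ) (hT : 0 < T) (u : ℝ → ℝ → E3) (hu : IsSol T u) :
    ∀ t ∈ Icc (0:ℝ) T,
      (∫ x in (0:ℝ)..1, ‖pdx (pdx u) x t‖ ^ 2)
        = (∫ x in (0:ℝ)..1, ‖pdt u x t‖ ^ 2) + ∫ x in (0:ℝ)..1, ‖pdx u x t‖ ^ 4 := by
  intro t ht
  have hsub : uIoo (0 : ℝ) 1 ⊆ Icc 0 1 := uIcc_of_le (zero_le_one' ℝ) ▸ uIoo_subset_uIcc_self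
  exact uxx_L2_identity_schrodinger_flow_general (hu.contDiff_space t)
    (fun x hx => hu.2.1 x (hsub hx) t ht) fun x hx => hu.hasDerivAt_time (hsub hx) ht

end
end
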